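/- Assume π(x) = li(x) + O(x·exp(−C·(log x)^{3/5}·(log log x)^{−1/5})) for some C > 0. Then for every fixed integer m ≥ 2 there exists an absolute constant A (independent of m) such that ∑_{2 ≤ n ≤ x} 1/π(n) = (1/2)·log² x − log x − log log x + A + k_2/log x + k_3/(2·log² x) + ... + k_m/((m−1)·log^{m−1} x) + O(1/log^m x) as x → ∞, where the k_j are defined by k_j + 1!·k_{j-1} + ... + (j−1)!·k_1 = j·j!. -/

import Mathlib

open Filter Real

noncomputable def li (x : ℝ) : ℝ := ∫ t in (2:ℝ)..x, 1 / Real.log t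

noncomputable def primePi (x : ℝ) : ℝ := Nat.primeCounting ⌊x⌋₊

noncomputable def pntDelta (x : ℝ) : ℝ :=
  (Real.log x) ^ ((3:ℝ)/5) * (Real.log (Real.log x)) ^ (-(1:ℝ)/5)

open Asymptotics MeasureTheory Set Topology

/-- A function whose derivative is dominated by the derivative of a function tending to `∞` is
itself dominated by that function. -/
theorem isBigO_of_hasDerivAt_isBigO {f f' g g' : ℝ → ℝ}
    (hf : ∀ᶠ x in atTop, HasDerivAt f (f' x) x) (hg : ∀ᶠ x in atTop, HasDerivAt g (g' x) x)
    (hg' : ∀ᶠ x in atTop, 0 ≤ g' x) (h : f' =O[atTop] g') (hlim : Tendsto g atTop atTop) :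
    f =O[atTop] g := by
  obtain ⟨c, hc, hbound⟩ := h.exists_pos
  obtain ⟨a, ha⟩ := eventually_atTop.1 (hf.and (hg.and (hg'.and hbound.bound)))
  have key : ∀ x, a ≤ x → ‖f x‖ ≤ c * (g x - g a) + ‖f a‖ := by
    intro x hx
    have hB : ∀ y, a ≤ y → HasDerivAt (fun y => c * (g y - g a) + ‖f a‖) (c * g' y) y :=
      fun y hy => (((ha y hy).2.1.sub_const _).const_mul c).add_const _
    refine image_norm_le_of_norm_deriv_right_le_deriv_boundary' (a := a) (b := x) (f' := f')
      (B := fun y => c * (g y - g a) + ‖f a‖) (B' := fun y => c * g' y)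
      (fun y hy => (ha y hy.1).1.continuousAt.continuousWithinAt)
      (fun y hy => (ha y hy.1).1.hasDerivWithinAt) (by simp)
      (fun y hy => (hB y hy.1).continuousAt.continuousWithinAt)
      (fun y hy => (hB y hy.1).hasDerivWithinAt) (fun y hy => ?_) ⟨hx, le_rfl⟩
    obtain ⟨-, -, h0, h1⟩ := ha y hy.1
    rwa [Real.norm_of_nonneg h0] at h1
  refine IsBigO.of_bound (c + 1) ?_
  filter_upwards [eventually_ge_atTop a, hlim.eventually_ge_atTop (‖f a‖ - c * g a),
    hlim.eventually_ge_atTop 0] with x hx h1 h2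
  rw [Real.norm_of_nonneg h2]
  linarith [key x hx]

theorem tendsto_div_log_pow_atTop (n : ℕ) :
    Tendsto (fun x : ℝ => x / log x ^ n) atTop atTop := by
  have h := (isLittleO_pow_log_id_atTop (n := n)).tendsto_div_nhds_zero
  have h' : Tendsto (fun x : ℝ => log x ^ n / id x) atTop (𝓝[>] 0) := by
    refine tendsto_nhdsWithin_iff.2 ⟨h, ?_⟩
    filter_upwards [eventually_gt_atTop 1] with x hx
    exact div_pos (pow_pos (log_pos hx) n) (by simp only [id]; linarith)
  refine h'.inv_tendsto_nhdsGT_zero.congr fun x => ?_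
  simp

theorem hasDerivAt_div_log_pow (n : ℕ) {x : ℝ} (hx : 1 < x) :
    HasDerivAt (fun x : ℝ => x / log x ^ n) (1 / log x ^ n - n / log x ^ (n + 1)) x := by
  have hl := log_pos hx
  have h := (hasDerivAt_id x).div ((hasDerivAt_log (by linarith : x ≠ 0)).pow n)
    (pow_ne_zero n hl.ne')
  refine h.congr_deriv ?_
  rcases n with - | n
  · simp
  · have : x ≠ 0 := by linarith
    simp only [id, Pi.pow_apply, Nat.add_sub_cancel]
    field_simp
    ring

/-- The truncated asymptotic expansion of the logarithmic integral. -/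
noncomputable def liExpansion (N : ℕ) (x : ℝ) : ℝ :=
  ∑ i ∈ Finset.range N, (Nat.factorial i : ℝ) * (x / log x ^ (i + 1))

theorem hasDerivAt_liExpansion (N : ℕ) {x : ℝ} (hx : 1 < x) :
    HasDerivAt (liExpansion N) (1 / log x - N.factorial / log x ^ (N + 1)) x := by
  induction N with
  | zero =>
    have he : liExpansion 0 = fun _ => 0 := by
      ext y
      simp [liExpansion]
    rw [he]
    exact (hasDerivAt_const x 0).congr_deriv (by simp)
  | succ N ih =>
    have hl := (log_pos hx).ne'
    have h := ih.add ((hasDerivAt_div_log_pow (N + 1) hx).const_mul (N.factorial : ℝ))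
    have he : liExpansion (N + 1) =
        liExpansion N + fun x => (N.factorial : ℝ) * (x / log x ^ (N + 1)) := by
      ext y
      simp [liExpansion, Finset.sum_range_succ]
    rw [he]
    refine h.congr_deriv ?_
    rw [Nat.factorial_succ]
    push_cast
    field_simp
    ring

theorem hasDerivAt_li {x : ℝ} (hx : 2 ≤ x) : HasDerivAt li (1 / log x) x := by
  have hc : ∀ y : ℝ, 1 < y → ContinuousAt (fun t => 1 / log t) y := fun y hy =>
    continuousAt_const.div (continuousAt_log (by linarith)) (log_pos hy).ne'
  refine intervalIntegral.integral_hasDerivAt_right ?_ ?_ (hc x (by linarith))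
  · refine ContinuousOn.intervalIntegrable_of_Icc hx fun y hy => ?_
    exact (hc y (by linarith [hy.1])).continuousWithinAt
  · exact ContinuousAt.stronglyMeasurableAtFilter (s := Ioi 1) isOpen_Ioi (fun y hy => hc y hy) x
      (by simp only [mem_Ioi]; linarith)

theorem li_sub_liExpansion_isBigO (N : ℕ) :
    (fun x => li x - liExpansion N x) =O[atTop] fun x => x / log x ^ (N + 1) := by
  refine isBigO_of_hasDerivAt_isBigO (f' := fun x => N.factorial / log x ^ (N + 1))
    (g' := fun x => 1 / log x ^ (N + 1) - (N + 1 : ℕ) / log x ^ (N + 2)) ?_ ?_ ?_ ?_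
    (tendsto_div_log_pow_atTop (N + 1))
  · filter_upwards [eventually_ge_atTop 2] with x hx
    refine ((hasDerivAt_li hx).sub (hasDerivAt_liExpansion N (by linarith))).congr_deriv ?_
    ring
  · filter_upwards [eventually_gt_atTop 1] with x hx using hasDerivAt_div_log_pow (N + 1) hx
  all_goals
    have hlow : ∀ᶠ x : ℝ in atTop, 0 < log x ∧ 1 / 2 * (1 / log x ^ (N + 1)) ≤
        1 / log x ^ (N + 1) - (N + 1 : ℕ) / log x ^ (N + 2) := by
      filter_upwards [tendsto_log_atTop.eventually_ge_atTop (2 * (N + 1 : ℕ)),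
        eventually_gt_atTop 1] with x hx hx1
      have hl := log_pos hx1
      refine ⟨hl, ?_⟩
      rw [← sub_nonneg]
      have : 1 / log x ^ (N + 1) - (N + 1 : ℕ) / log x ^ (N + 2) - 1 / 2 * (1 / log x ^ (N + 1))
          = (log x - 2 * (N + 1 : ℕ)) / (2 * log x ^ (N + 2)) := by
        field_simp
        ring
      rw [this]
      exact div_nonneg (by linarith) (by positivity)
  · filter_upwards [hlow] with x hx
    have := hx.1
    exact le_trans (by positivity) hx.2
  · refine IsBigO.of_bound (2 * N.factorial) ?_
    filter_upwards [hlow] with x hx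
    have h0 := hx.1
    have h1 := hx.2
    have h2 : 0 ≤ 1 / 2 * (1 / log x ^ (N + 1)) := by positivity
    rw [Real.norm_of_nonneg (by positivity), Real.norm_of_nonneg (h2.trans h1)]
    calc (N.factorial : ℝ) / log x ^ (N + 1)
        = 2 * N.factorial * (1 / 2 * (1 / log x ^ (N + 1))) := by ring
      _ ≤ _ := by gcongr

theorem exp_neg_mul_pntDelta_isBigO {C : ℝ} (hC : 0 < C) (N : ℕ) :
    (fun x => rexp (-C * pntDelta x)) =O[atTop] fun x => 1 / log x ^ N := by
  have hy : (fun y : ℝ => rexp (-C * (y ^ ((3 : ℝ) / 5) * log y ^ (-(1 : ℝ) / 5)))) =O[atTop]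
      fun y => 1 / y ^ N := by
    have h1 := ((isLittleO_exp_neg_mul_rpow_atTop hC (-(2 * N : ℝ))).comp_tendsto
      (tendsto_rpow_atTop (show (0 : ℝ) < 1 / 2 by norm_num))).isBigO
    have h2 : (fun y : ℝ => rexp (-C * (y ^ ((3 : ℝ) / 5) * log y ^ (-(1 : ℝ) / 5)))) =O[atTop]
        fun y => rexp (-C * y ^ ((1 : ℝ) / 2)) := by
      refine IsBigO.of_bound 1 ?_
      filter_upwards [(isLittleO_log_rpow_atTop
        (show (0 : ℝ) < 1 / 2 by norm_num)).bound one_pos, eventually_gt_atTop 1] with y hy hy1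
      have hl := log_pos hy1
      have hy0 : 0 < y := by linarith
      rw [Real.norm_of_nonneg hl.le, Real.norm_of_nonneg (by positivity), one_mul] at hy
      rw [one_mul, Real.norm_of_nonneg (exp_pos _).le, Real.norm_of_nonneg (exp_pos _).le,
        exp_le_exp]
      have h3 : y ^ (-(1 : ℝ) / 10) ≤ log y ^ (-(1 : ℝ) / 5) := by
        have := rpow_le_rpow_of_nonpos hl hy (show -(1 : ℝ) / 5 ≤ 0 by norm_num)
        rw [← rpow_mul hy0.le] at this
        convert this using 2
        norm_num
      have h4 : y ^ ((1 : ℝ) / 2) ≤ y ^ ((3 : ℝ) / 5) * log y ^ (-(1 : ℝ) / 5) := by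
        calc y ^ ((1 : ℝ) / 2) = y ^ ((3 : ℝ) / 5) * y ^ (-(1 : ℝ) / 10) := by
              rw [← rpow_add hy0]; norm_num
          _ ≤ _ := by gcongr
      nlinarith
    refine (h2.trans h1).congr' EventuallyEq.rfl ?_
    filter_upwards [eventually_gt_atTop 0] with y hy
    simp only [Function.comp]
    rw [← rpow_mul hy.le, show (1 : ℝ) / 2 * -(2 * N) = -N by ring, rpow_neg hy.le, rpow_natCast,
      one_div]
  exact hy.comp_tendsto tendsto_log_atTop

/-- If the first `N` coefficients of the product of two power series are those of `1`, then the
product of their truncations is `1 + O(u ^ N)` as `u → 0`. -/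
theorem sum_mul_sum_sub_one_isBigO {a b : ℕ → ℝ} {N : ℕ}
    (h : ∀ n < N, ∑ i ∈ Finset.range (n + 1), a i * b (n - i) = if n = 0 then 1 else 0) :
    (fun u : ℝ => (∑ i ∈ Finset.range N, a i * u ^ i) * (∑ i ∈ Finset.range N, b i * u ^ i) - 1)
      =O[𝓝 0] fun u => u ^ N := by
  let P (c : ℕ → ℝ) : Polynomial ℝ := ∑ i ∈ Finset.range N, Polynomial.C (c i) * Polynomial.X ^ i
  have hP : ∀ c : ℕ → ℝ, ∀ i < N, (P c).coeff i = c i := by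
    intro c i hi
    simp [P, Polynomial.finsetSum_coeff, hi]
  have hdvd : Polynomial.X ^ N ∣ P a * P b - 1 := by
    rw [Polynomial.X_pow_dvd_iff]
    intro n hn
    rw [Polynomial.coeff_sub, Polynomial.coeff_mul,
      Finset.Nat.sum_antidiagonal_eq_sum_range_succ (fun i j => (P a).coeff i * (P b).coeff j),
      Polynomial.coeff_one, ← h n hn, sub_eq_zero]
    refine Finset.sum_congr rfl fun i hi => ?_
    have := Finset.mem_range.1 hi
    rw [hP a i (by lia), hP b (n - i) (by lia)]
  obtain ⟨R, hR⟩ := hdvd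
  have hev : ∀ u : ℝ, (∑ i ∈ Finset.range N, a i * u ^ i) * (∑ i ∈ Finset.range N, b i * u ^ i) - 1
      = u ^ N * R.eval u := by
    intro u
    have := congrArg (Polynomial.eval u) hR
    simpa [P, Polynomial.eval_finsetSum] using this
  simp_rw [hev]
  simpa using (isBigO_refl (fun u : ℝ => u ^ N) (𝓝 0)).mul
    ((R.continuous.tendsto 0).isBigO_one ℝ)

/-- The coefficients of the power series inverse to `∑ i! uⁱ`. -/
def factorialSeriesInv (k : ℕ → ℝ) : ℕ → ℝ
  | 0 => 1
  | 1 => -1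
  | j + 2 => -k (j + 1)

theorem sum_factorial_mul_factorialSeriesInv {k : ℕ → ℝ}
    (hk : ∀ j : ℕ, 1 ≤ j →
      ∑ i ∈ Finset.range j, (Nat.factorial i : ℝ) * k (j - i) = j * Nat.factorial j) (n : ℕ) :
    ∑ i ∈ Finset.range (n + 1), (Nat.factorial i : ℝ) * factorialSeriesInv k (n - i) =
      if n = 0 then 1 else 0 := by
  rcases n with - | j
  · simp [factorialSeriesInv]
  · rw [Finset.sum_range_succ, Finset.sum_range_succ]
    have hs : ∑ i ∈ Finset.range j, (Nat.factorial i : ℝ) * factorialSeriesInv k (j + 1 - i) =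
        -(j * Nat.factorial j) := by
      rcases Nat.eq_zero_or_pos j with rfl | hj
      · simp
      · rw [← hk j hj, ← Finset.sum_neg_distrib]
        refine Finset.sum_congr rfl fun i hi => ?_
        have := Finset.mem_range.1 hi
        obtain ⟨d, rfl⟩ : ∃ d, j = i + d + 1 := ⟨j - i - 1, by lia⟩
        rw [show i + d + 1 + 1 - i = d + 2 by lia, show i + d + 1 - i = d + 1 by lia,
          factorialSeriesInv, mul_neg]
    rw [hs, Nat.add_sub_cancel_left, Nat.sub_self, Nat.factorial_succ]
    simp [factorialSeriesInv]
    ring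

theorem tendsto_inv_log_atTop : Tendsto (fun x : ℝ => (log x)⁻¹) atTop (𝓝 0) :=
  tendsto_log_atTop.inv_tendsto_atTop

theorem primePi_mul_log_div_isBigO {C : ℝ} (hC : 0 < C)
    (hR : (fun x : ℝ => primePi x - li x) =O[atTop] (fun x : ℝ => x * rexp (-C * pntDelta x)))
    (N : ℕ) :
    (fun x => primePi x * (log x / x) - ∑ i ∈ Finset.range N, (i.factorial : ℝ) * (log x)⁻¹ ^ i)
      =O[atTop] fun x => (log x)⁻¹ ^ N := by
  have h1 : (fun x : ℝ => primePi x - li x) =O[atTop] fun x => x / log x ^ (N + 1) := by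
    refine hR.trans ?_
    refine ((isBigO_refl (fun x : ℝ => x) atTop).mul
      (exp_neg_mul_pntDelta_isBigO hC (N + 1))).congr_right fun x => ?_
    rw [mul_one_div]
  have h2 := (h1.add (li_sub_liExpansion_isBigO N)).mul
    (isBigO_refl (fun x : ℝ => log x / x) atTop)
  refine h2.congr' ?_ ?_
  all_goals
    filter_upwards [eventually_gt_atTop 1] with x hx
    have hl := (log_pos hx).ne'
    have hx0 : x ≠ 0 := by linarith
  · rw [sub_add_sub_cancel, sub_mul, liExpansion, Finset.sum_mul]
    congr 1
    refine Finset.sum_congr rfl fun i _ => ?_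
    rw [inv_pow]
    field_simp
    ring
  · rw [inv_pow]
    field_simp
    ring

theorem inv_primePi_sub_isBigO {C : ℝ} (hC : 0 < C)
    (hR : (fun x : ℝ => primePi x - li x) =O[atTop] (fun x : ℝ => x * rexp (-C * pntDelta x)))
    {k : ℕ → ℝ}
    (hk : ∀ j : ℕ, 1 ≤ j →
      ∑ i ∈ Finset.range j, (Nat.factorial i : ℝ) * k (j - i) = j * Nat.factorial j) (N : ℕ) :
    (fun x => (primePi x)⁻¹ -
        log x / x * ∑ i ∈ Finset.range N, factorialSeriesInv k i * (log x)⁻¹ ^ i)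
      =O[atTop] fun x => log x / x * (log x)⁻¹ ^ N := by
  set f : ℝ → ℝ := fun x => primePi x * (log x / x) with hf
  set G : ℝ → ℝ := fun x => ∑ i ∈ Finset.range N, factorialSeriesInv k i * (log x)⁻¹ ^ i with hG
  have hlim : Tendsto f atTop (𝓝 1) := by
    have h := (primePi_mul_log_div_isBigO hC hR 1).trans_tendsto (by simpa using tendsto_inv_log_atTop)
    simpa using h.add_const 1
  have hGb : G =O[atTop] fun _ => (1 : ℝ) := by
    have hc : Continuous fun u : ℝ => ∑ i ∈ Finset.range N, factorialSeriesInv k i * u ^ i := by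
      fun_prop
    exact ((hc.tendsto 0).isBigO_one ℝ).comp_tendsto tendsto_inv_log_atTop
  have hprod : (fun x => f x * G x - 1) =O[atTop] fun x => (log x)⁻¹ ^ N := by
    have h1 := (primePi_mul_log_div_isBigO hC hR N).mul hGb
    have h2 := (sum_mul_sum_sub_one_isBigO (N := N)
      fun n _ => sum_factorial_mul_factorialSeriesInv hk n).comp_tendsto tendsto_inv_log_atTop
    refine ((h1.congr_right fun x => mul_one _).add h2).congr_left fun x => ?_
    simp only [hf, hG, Function.comp]
    ring
  have hfinv : (fun x => -(f x)⁻¹) =O[atTop] fun _ => (1 : ℝ) :=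
    (hlim.inv₀ one_ne_zero).neg.isBigO_one ℝ
  refine ((isBigO_refl (fun x : ℝ => log x / x) atTop).mul
    ((hprod.mul hfinv).congr_right fun x => mul_one _)).congr' ?_ EventuallyEq.rfl
  filter_upwards [eventually_gt_atTop 1, hlim.eventually_ne one_ne_zero] with x hx hfx
  have hl := (log_pos hx).ne'
  have hx0 : x ≠ 0 := by linarith
  have hp : primePi x ≠ 0 := left_ne_zero_of_mul hfx
  change log x / x * ((f x * G x - 1) * -(f x)⁻¹) = (primePi x)⁻¹ - log x / x * G x
  simp only [hf]
  field_simp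
  ring

/-- The terms of the expansion of `∑ 1 / π(n)` up to order `1 / log ^ (m - 1)`, without the
constant term. -/
noncomputable def mainTerm (k : ℕ → ℝ) (m : ℕ) (x : ℝ) : ℝ :=
  (1 / 2) * log x ^ 2 - log x - log (log x) +
    ∑ j ∈ Finset.Icc 2 m, k j / (((j : ℝ) - 1) * log x ^ (j - 1))

theorem hasDerivAt_inv_log_pow (n : ℕ) {x : ℝ} (hx : 1 < x) :
    HasDerivAt (fun x : ℝ => ((n + 1 : ℝ) * log x ^ (n + 1))⁻¹) (-(x * log x ^ (n + 2))⁻¹) x := by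
  have hl := log_pos hx
  have hx0 : x ≠ 0 := by linarith
  have h := (((hasDerivAt_log hx0).fun_pow (n + 1)).const_mul (n + 1 : ℝ)).fun_inv (by positivity)
  refine h.congr_deriv ?_
  push_cast [Nat.add_sub_cancel]
  field_simp
  ring

theorem hasDerivAt_mainTerm {k : ℕ → ℝ} (hk1 : k 1 = 1) {m : ℕ} (hm : 1 ≤ m) {x : ℝ}
    (hx : 1 < x) :
    HasDerivAt (mainTerm k m)
      (log x / x * ∑ i ∈ Finset.range (m + 2), factorialSeriesInv k i * (log x)⁻¹ ^ i) x := by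
  have hl := log_pos hx
  have hx0 : x ≠ 0 := by linarith
  induction m, hm using Nat.le_induction with
  | base =>
    have h := (((((hasDerivAt_log hx0).fun_pow 2).const_mul (1 / 2)).sub (hasDerivAt_log hx0)).sub
      ((hasDerivAt_log hx0).log hl.ne'))
    have he : mainTerm k 1 = fun x => (1 / 2) * log x ^ 2 - log x - log (log x) := by
      ext y
      simp [mainTerm]
    rw [he]
    refine h.congr_deriv ?_
    simp [Finset.sum_range_succ, factorialSeriesInv, hk1]
    field_simp
    ring
  | succ m hm ih =>
    obtain ⟨n, rfl⟩ : ∃ n, m = n + 1 := ⟨m - 1, by lia⟩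
    have h := ih.add ((hasDerivAt_inv_log_pow n hx).const_mul (k (n + 2)))
    have he : mainTerm k (n + 1 + 1) =
        mainTerm k (n + 1) + fun x => k (n + 2) * ((n + 1 : ℝ) * log x ^ (n + 1))⁻¹ := by
      ext y
      simp only [mainTerm, Pi.add_apply]
      rw [Finset.sum_Icc_succ_top (by lia), ← add_assoc]
      congr 1
      push_cast
      rw [div_eq_mul_inv]
      ring
    rw [he]
    refine h.congr_deriv ?_
    rw [Finset.sum_range_succ _ (n + 1 + 2), mul_add]
    congr 1
    rw [factorialSeriesInv, inv_pow]
    field_simp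
    ring

theorem tendsto_mainTerm_sub (k : ℕ → ℝ) (m : ℕ) :
    Tendsto (fun x => mainTerm k m x - mainTerm k 1 x) atTop (𝓝 0) := by
  have h : ∀ j ∈ Finset.Icc 2 m,
      Tendsto (fun x : ℝ => k j / (((j : ℝ) - 1) * log x ^ (j - 1))) atTop (𝓝 0) := by
    intro j hj
    have hj2 := (Finset.mem_Icc.1 hj).1
    have hj' : (0 : ℝ) < (j : ℝ) - 1 := by
      have : (2 : ℝ) ≤ j := by exact_mod_cast hj2
      linarith
    exact (((tendsto_pow_atTop (by lia)).comp tendsto_log_atTop).const_mul_atTop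
      hj').const_div_atTop _
  have hs := tendsto_finsetSum _ h
  simpa [mainTerm] using hs

theorem exists_integral_sub_isBigO {h : ℝ → ℝ} {m : ℕ} (hm : 1 ≤ m)
    (hloc : LocallyIntegrableOn h (Ici 2))
    (hO : h =O[atTop] fun x => (x * log x ^ (m + 1))⁻¹) :
    ∃ A : ℝ, (fun x => (∫ t in (2 : ℝ)..x, h t) - A) =O[atTop] fun x => 1 / log x ^ m := by
  obtain ⟨n, rfl⟩ : ∃ n, m = n + 1 := ⟨m - 1, by lia⟩
  set g : ℝ → ℝ := fun x => -((n + 1 : ℝ) * log x ^ (n + 1))⁻¹ with hg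
  have hderiv : ∀ x : ℝ, 1 < x → HasDerivAt g (x * log x ^ (n + 2))⁻¹ x := fun x hx => by
    simpa only [neg_neg] using (hasDerivAt_inv_log_pow n hx).fun_neg
  have hpos : ∀ x : ℝ, 1 < x → 0 ≤ (x * log x ^ (n + 2))⁻¹ := fun x hx => by
    have := log_pos hx
    positivity
  have hlim : Tendsto g atTop (𝓝 0) := by
    have := (((tendsto_pow_atTop (α := ℝ) (Nat.succ_ne_zero n)).comp
      tendsto_log_atTop).const_mul_atTop
      (show (0 : ℝ) < n + 1 by positivity)).inv_tendsto_atTop.neg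
    rw [neg_zero] at this
    exact this
  have hgint : ∀ a : ℝ, 2 ≤ a → IntegrableOn (fun x : ℝ => (x * log x ^ (n + 2))⁻¹) (Ioi a) :=
    fun a ha => integrableOn_Ioi_deriv_of_nonneg'
      (fun x hx => hderiv x (by linarith [mem_Ici.1 hx]))
      (fun x hx => hpos x (by linarith [mem_Ioi.1 hx])) hlim
  have hint : IntegrableOn h (Ioi 2) :=
    (hloc.integrableOn_of_isBigO_atTop hO
      ⟨Ioi 2, Ioi_mem_atTop 2, hgint 2 le_rfl⟩).mono_set Ioi_subset_Ici_self
  refine ⟨∫ t in Ioi 2, h t, ?_⟩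
  obtain ⟨c, hc, hbound⟩ := hO.exists_pos
  obtain ⟨X, hX⟩ := eventually_atTop.1 hbound.bound
  refine IsBigO.of_bound c ?_
  filter_upwards [eventually_ge_atTop X, eventually_ge_atTop 2] with x hxX hx2
  have hl := log_pos (show 1 < x by linarith)
  rw [← intervalIntegral.integral_interval_add_Ioi hint
    (hint.mono_set (Ioi_subset_Ioi hx2)), sub_add_cancel_left, norm_neg]
  calc ‖∫ t in Ioi x, h t‖ ≤ ∫ t in Ioi x, c * (t * log t ^ (n + 2))⁻¹ := by
        refine norm_integral_le_of_norm_le ((hgint x hx2).const_mul c) ?_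
        refine (ae_restrict_iff' measurableSet_Ioi).2 (Eventually.of_forall fun t ht => ?_)
        have ht' := mem_Ioi.1 ht
        have := hX t (by linarith)
        rwa [Real.norm_of_nonneg (hpos t (by linarith))] at this
    _ = c * (((n + 1 : ℝ))⁻¹ * (1 / log x ^ (n + 1))) := by
        rw [integral_const_mul, integral_Ioi_of_hasDerivAt_of_nonneg'
          (fun t ht => hderiv t (by linarith [mem_Ici.1 ht]))
          (fun t ht => hpos t (by linarith [mem_Ioi.1 ht])) hlim, hg]
        simp [mul_comm]
    _ ≤ c * ‖1 / log x ^ (n + 1)‖ := by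
        rw [Real.norm_of_nonneg (by positivity)]
        gcongr
        refine mul_le_of_le_one_left (by positivity) (inv_le_one_of_one_le₀ ?_)
        linarith [(Nat.cast_nonneg n : (0 : ℝ) ≤ n)]

theorem primePi_mono : Monotone primePi := fun _ _ h =>
  Nat.cast_le.2 (Nat.monotone_primeCounting (Nat.floor_mono h))

theorem primePi_pos {x : ℝ} (hx : 2 ≤ x) : 0 < primePi x := by
  have h : primePi 2 ≤ primePi x := primePi_mono hx
  have h2 : primePi 2 = 1 := by
    have : Nat.primeCounting 2 = 1 := by decide
    simp [primePi, this]
  linarith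

theorem antitoneOn_inv_primePi : AntitoneOn (fun x => (primePi x)⁻¹) (Ici 2) := fun _ hx _ _ h =>
  inv_anti₀ (primePi_pos hx) (primePi_mono h)

theorem locallyIntegrableOn_inv_primePi : LocallyIntegrableOn (fun x => (primePi x)⁻¹) (Ici 2) := by
  rw [locallyIntegrableOn_iff isClosed_Ici.isLocallyClosed]
  exact fun K hK hKc => (antitoneOn_inv_primePi.mono hK).integrableOn_isCompact hKc

theorem intervalIntegrable_inv_primePi {a b : ℝ} (ha : 2 ≤ a) (hb : 2 ≤ b) :
    IntervalIntegrable (fun x => (primePi x)⁻¹) volume a b :=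
  (antitoneOn_inv_primePi.mono fun _ hx => (le_min ha hb).trans hx.1).intervalIntegrable

theorem sum_one_div_primeCounting_eq_integral {n : ℕ} (hn : 1 ≤ n) :
    ∑ i ∈ Finset.Icc 2 n, 1 / (Nat.primeCounting i : ℝ) =
      ∫ t in (2 : ℝ)..(n + 1 : ℝ), (primePi t)⁻¹ := by
  induction n, hn using Nat.le_induction with
  | base => norm_num
  | succ n hn ih =>
    have hn' : (1 : ℝ) ≤ n := by exact_mod_cast hn
    have hstep : ∫ t in (n + 1 : ℝ)..(n + 1 + 1 : ℝ), (primePi t)⁻¹ =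
        1 / (Nat.primeCounting (n + 1) : ℝ) := by
      rw [intervalIntegral.integral_congr_Ioo_of_le (g := fun _ =>
        1 / (Nat.primeCounting (n + 1) : ℝ)) (by linarith)]
      · simp
      · intro t ht
        have hfl : ⌊t⌋₊ = n + 1 := by
          rw [Nat.floor_eq_iff (by linarith [ht.1])]
          push_cast
          exact ⟨ht.1.le, ht.2⟩
        simp [primePi, hfl]
    rw [Finset.sum_Icc_succ_top (by lia), ih, ← hstep]
    push_cast
    exact intervalIntegral.integral_add_adjacent_intervals
      (intervalIntegrable_inv_primePi le_rfl (by linarith))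
      (intervalIntegrable_inv_primePi (by linarith) (by linarith))

theorem abs_sum_sub_integral_inv_primePi_le {x : ℝ} (hx : 2 ≤ x) :
    ‖(∑ i ∈ Finset.Icc 2 ⌊x⌋₊, 1 / (Nat.primeCounting i : ℝ)) -
      ∫ t in (2 : ℝ)..x, (primePi t)⁻¹‖ ≤ (primePi x)⁻¹ := by
  have hfl : 1 ≤ ⌊x⌋₊ := Nat.le_floor (by push_cast; linarith)
  have h1 : x < ⌊x⌋₊ + 1 := Nat.lt_floor_add_one x
  have h2 : (⌊x⌋₊ : ℝ) ≤ x := Nat.floor_le (by linarith)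
  rw [sum_one_div_primeCounting_eq_integral hfl, intervalIntegral.integral_interval_sub_left
    (intervalIntegrable_inv_primePi le_rfl (by linarith))
    (intervalIntegrable_inv_primePi le_rfl hx)]
  have hp := inv_pos.2 (primePi_pos hx)
  refine (intervalIntegral.norm_integral_le_of_norm_le_const (C := (primePi x)⁻¹)
    fun t ht => ?_).trans ?_
  · rw [uIoc_of_le h1.le] at ht
    have ht2 : 2 ≤ t := by linarith [ht.1]
    rw [Real.norm_of_nonneg (inv_pos.2 (primePi_pos ht2)).le]
    exact antitoneOn_inv_primePi hx ht2 ht.1.le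
  · refine mul_le_of_le_one_right hp.le ?_
    rw [abs_of_pos (by linarith)]
    linarith

theorem log_div_isBigO (m : ℕ) :
    (fun x : ℝ => log x / x) =O[atTop] fun x => 1 / log x ^ m := by
  have h := (isLittleO_pow_log_id_atTop (n := m + 1)).isBigO.mul
    (isBigO_refl (fun x : ℝ => (x * log x ^ m)⁻¹) atTop)
  refine h.congr' ?_ ?_
  all_goals
    filter_upwards [eventually_gt_atTop 1] with x hx
    have hl := (log_pos hx).ne'
    have hx0 : x ≠ 0 := by linarith
  · field_simp
    ring
  · simp only [id]
    field_simp

theorem exists_integral_inv_primePi_sub_mainTerm_isBigO {C : ℝ} (hC : 0 < C)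
    (hR : (fun x : ℝ => primePi x - li x) =O[atTop] (fun x : ℝ => x * rexp (-C * pntDelta x)))
    {k : ℕ → ℝ}
    (hk : ∀ j : ℕ, 1 ≤ j →
      ∑ i ∈ Finset.range j, (Nat.factorial i : ℝ) * k (j - i) = j * Nat.factorial j)
    {m : ℕ} (hm : 1 ≤ m) :
    ∃ A : ℝ, (fun x => (∫ t in (2 : ℝ)..x, (primePi t)⁻¹) - mainTerm k m x - A)
      =O[atTop] fun x => 1 / log x ^ m := by
  have hk1 : k 1 = 1 := by simpa using hk 1 le_rfl
  set φ : ℝ → ℝ := fun x =>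
    log x / x * ∑ i ∈ Finset.range (m + 2), factorialSeriesInv k i * (log x)⁻¹ ^ i
  have hφc : ContinuousOn φ (Ici 2) := by
    have h0 : ∀ x ∈ Ici (2 : ℝ), x ≠ 0 := fun x hx => by linarith [mem_Ici.1 hx]
    have h1 : ∀ x ∈ Ici (2 : ℝ), log x ≠ 0 := fun x hx =>
      (log_pos (by linarith [mem_Ici.1 hx])).ne'
    have hlog : ContinuousOn log (Ici 2) := continuousOn_log.mono h0
    exact (hlog.div continuousOn_id h0).mul (continuousOn_finsetSum _ fun i _ =>
      continuousOn_const.mul ((hlog.inv₀ h1).pow i))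
  have hO : (fun x => (primePi x)⁻¹ - φ x) =O[atTop] fun x => (x * log x ^ (m + 1))⁻¹ := by
    refine (inv_primePi_sub_isBigO hC hR hk (m + 2)).congr' EventuallyEq.rfl ?_
    filter_upwards [eventually_gt_atTop 1] with x hx
    have hl := (log_pos hx).ne'
    rw [inv_pow]
    field_simp
    ring
  obtain ⟨A, hA⟩ := exists_integral_sub_isBigO hm (locallyIntegrableOn_inv_primePi.sub
    (hφc.locallyIntegrableOn measurableSet_Ici)) hO
  refine ⟨A - mainTerm k m 2, hA.congr' ?_ EventuallyEq.rfl⟩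
  filter_upwards [eventually_ge_atTop 2] with x hx
  have hφi : IntervalIntegrable φ volume 2 x :=
    (hφc.mono fun y hy => hy.1).intervalIntegrable_of_Icc hx
  have hftc : ∫ t in (2 : ℝ)..x, φ t = mainTerm k m x - mainTerm k m 2 :=
    intervalIntegral.integral_eq_sub_of_hasDerivAt (fun y hy => by
      rw [uIcc_of_le hx] at hy
      exact hasDerivAt_mainTerm hk1 hm (by linarith [hy.1])) hφi
  simp only [Pi.sub_apply]
  rw [intervalIntegral.integral_sub (intervalIntegrable_inv_primePi le_rfl hx) hφi, hftc]
  ring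

theorem main_theorem (C : ℝ) (hC : 0 < C)
    (hR : (fun x : ℝ => primePi x - li x)
      =O[atTop] (fun x : ℝ => x * Real.exp (-C * pntDelta x)))
    (k : ℕ → ℝ)
    (hk : ∀ j : ℕ, 1 ≤ j →
      ∑ i ∈ Finset.range j, (Nat.factorial i : ℝ) * k (j - i) =
        j * Nat.factorial j) :
    ∃ A : ℝ, ∀ m : ℕ, 2 ≤ m →
      (fun x : ℝ => (∑ n ∈ Finset.Icc 2 ⌊x⌋₊, 1 / (Nat.primeCounting n : ℝ)) -
          ((1 / 2) * (Real.log x) ^ 2 - Real.log x - Real.log (Real.log x) + A +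
            ∑ j ∈ Finset.Icc 2 m, k j / (((j : ℝ) - 1) * (Real.log x) ^ (j - 1))))
        =O[atTop] (fun x : ℝ => 1 / (Real.log x) ^ m) := by
  choose! A hA using fun (m : ℕ) (hm : 1 ≤ m) =>
    exists_integral_inv_primePi_sub_mainTerm_isBigO hC hR hk hm
  have hlim : ∀ m, 1 ≤ m →
      Tendsto (fun x => (∫ t in (2 : ℝ)..x, (primePi t)⁻¹) - mainTerm k m x) atTop (𝓝 (A m)) := by
    intro m hm
    have h0 : Tendsto (fun x : ℝ => 1 / log x ^ m) atTop (𝓝 0) :=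
      ((tendsto_pow_atTop (by lia)).comp tendsto_log_atTop).const_div_atTop 1
    simpa using ((hA m hm).trans_tendsto h0).add_const (A m)
  have hconst : ∀ m, 1 ≤ m → A m = A 1 := by
    intro m hm
    refine tendsto_nhds_unique ?_ (hlim 1 le_rfl)
    simpa using (hlim m hm).add (tendsto_mainTerm_sub k m)
  have hinv : ∀ m, (fun x => (primePi x)⁻¹) =O[atTop] fun x => 1 / log x ^ m := by
    intro m
    have h := (inv_primePi_sub_isBigO hC hR hk 0)
    simp only [Finset.range_zero, Finset.sum_empty, mul_zero, sub_zero, pow_zero, mul_one] at h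
    exact h.trans (log_div_isBigO m)
  refine ⟨A 1, fun m hm => ?_⟩
  have hdiff : (fun x : ℝ => (∑ i ∈ Finset.Icc 2 ⌊x⌋₊, 1 / (Nat.primeCounting i : ℝ)) -
      ∫ t in (2 : ℝ)..x, (primePi t)⁻¹) =O[atTop] fun x => 1 / log x ^ m := by
    refine IsBigO.trans (IsBigO.of_bound 1 ?_) (hinv m)
    filter_upwards [eventually_ge_atTop 2] with x hx
    rw [one_mul, Real.norm_of_nonneg (inv_pos.2 (primePi_pos hx)).le]
    exact abs_sum_sub_integral_inv_primePi_le hx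
  refine (hdiff.add (hA m (by lia))).congr_left fun x => ?_
  rw [hconst m (by lia), mainTerm]
  ring
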